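/- arXiv:1806.07496 — 5 statements merged into one kernel-verified Lean document; each statement's English description precedes it below -/
import Mathlib

section
/- Let q be a prime power, n, k, r, ρ positive integers, and let 𝔹 ⊆ F_q^{n×n} be a nonzero F_q-linear array code of F_q-dimension k that has (r,ρ) cover-locality, with minimum cover distance d = d_C(𝔹). Then (as an inequality of rational numbers) d ≤ n − k/n + 1 − (⌈k/(n·r)⌉ − 1)·(ρ − 1). -/
/-- `X` is a cover of the matrix `E`: every nonzero entry lies in a row line
(`Sum.inl i`) or a column line (`Sum.inr j`) belonging to `X`. -/
def IsCover {F : Type*} [Zero F] {m n : ℕ} (E : Matrix (Fin m) (Fin n) F)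
    (X : Finset (Fin m ⊕ Fin n)) : Prop :=
  ∀ i j, E i j ≠ 0 → Sum.inl i ∈ X ∨ Sum.inr j ∈ X

/-- The cover weight of a matrix: the minimum cardinality of a cover. -/
noncomputable def coverWeight {F : Type*} [Zero F] {m n : ℕ}
    (E : Matrix (Fin m) (Fin n) F) : ℕ :=
  sInf {k | ∃ X : Finset (Fin m ⊕ Fin n), IsCover E X ∧ X.card = k}

/-- The Hamming weight of a vector: its number of nonzero coordinates. -/
noncomputable def hWt {K : Type*} [Zero K] {n : ℕ} (c : Fin n → K) : ℕ :=
  Nat.card {j : Fin n // c j ≠ 0}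

/-- The minimum cover distance of a (linear) array code, as a set of matrices:
the minimum cover weight of a nonzero codeword. -/
noncomputable def minCoverDist {F : Type*} [Zero F] {n : ℕ}
    (S : Set (Matrix (Fin n) (Fin n) F)) : ℕ :=
  sInf {d | ∃ M ∈ S, M ≠ 0 ∧ coverWeight M = d}

/-- The minimum Hamming distance of a (linear) code, as a set of vectors:
the minimum Hamming weight of a nonzero codeword. -/
noncomputable def minHammingDist {K : Type*} [Zero K] {n : ℕ}
    (S : Set (Fin n → K)) : ℕ :=
  sInf {d | ∃ c ∈ S, c ≠ 0 ∧ hWt c = d}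

/-- Restriction of a matrix to a set of rows (other rows are zeroed out). -/
def rowRestrict {F : Type*} [Zero F] {n : ℕ} (Γ : Finset (Fin n))
    (M : Matrix (Fin n) (Fin n) F) : Matrix (Fin n) (Fin n) F :=
  Matrix.of fun i j => if i ∈ Γ then M i j else 0

/-- Restriction of a matrix to a set of columns (other columns are zeroed out). -/
def colRestrict {F : Type*} [Zero F] {n : ℕ} (Γ : Finset (Fin n))
    (M : Matrix (Fin n) (Fin n) F) : Matrix (Fin n) (Fin n) F :=
  Matrix.of fun i j => if j ∈ Γ then M i j else 0

/-- `(r, ρ)` cover-locality: every row (resp. column) line has a recovery set of at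
most `r + ρ - 1` rows (resp. columns) containing it, on which the restricted code
has minimum cover distance at least `ρ`. -/
def CoverLocality {F : Type*} [Field F] {n : ℕ}
    (B : Submodule F (Matrix (Fin n) (Fin n) F)) (r ρ : ℕ) : Prop :=
  (∀ i : Fin n, ∃ Γ : Finset (Fin n), i ∈ Γ ∧ Γ.card ≤ r + ρ - 1 ∧
    ∀ M ∈ B, rowRestrict Γ M ≠ 0 → ρ ≤ coverWeight (rowRestrict Γ M)) ∧
  (∀ j : Fin n, ∃ Γ : Finset (Fin n), j ∈ Γ ∧ Γ.card ≤ r + ρ - 1 ∧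
    ∀ M ∈ B, colRestrict Γ M ≠ 0 → ρ ≤ coverWeight (colRestrict Γ M))

theorem coverWeight_le_card {F : Type*} [Zero F] {m n : ℕ} {E : Matrix (Fin m) (Fin n) F}
    {X : Finset (Fin m ⊕ Fin n)} (h : IsCover E X) : coverWeight E ≤ X.card :=
  Nat.sInf_le ⟨X, h, rfl⟩

/-- A matrix supported on the rows in `T` has cover weight at most `T.card`. -/
theorem coverWeight_le_card_rows {F : Type*} [Zero F] {m n : ℕ} {E : Matrix (Fin m) (Fin n) F}
    {T : Finset (Fin m)} (h : ∀ i j, E i j ≠ 0 → i ∈ T) : coverWeight E ≤ T.card := by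
  have hc : IsCover E (T.map Function.Embedding.inl) := fun i j hij =>
    Or.inl (Finset.mem_map_of_mem Function.Embedding.inl (h i j hij))
  simpa using coverWeight_le_card hc

/-- The codewords of `B` that vanish on all rows in `S`. -/
def shortenRows {F : Type*} [Field F] {n : ℕ} (B : Submodule F (Matrix (Fin n) (Fin n) F))
    (S : Finset (Fin n)) : Submodule F (Matrix (Fin n) (Fin n) F) where
  carrier := {M | M ∈ B ∧ ∀ i ∈ S, ∀ j, M i j = 0}
  zero_mem' := ⟨B.zero_mem, by simp⟩
  add_mem' := fun ha hb => ⟨B.add_mem ha.1 hb.1, fun i hi j => by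
    simp [ha.2 i hi j, hb.2 i hi j]⟩
  smul_mem' := fun c _ ha => ⟨B.smul_mem c ha.1, fun i hi j => by simp [ha.2 i hi j]⟩

section shortenRows

variable {F : Type*} [Field F] {n : ℕ} {B : Submodule F (Matrix (Fin n) (Fin n) F)}

theorem mem_shortenRows {S : Finset (Fin n)} {M : Matrix (Fin n) (Fin n) F} :
    M ∈ shortenRows B S ↔ M ∈ B ∧ ∀ i ∈ S, ∀ j, M i j = 0 :=
  Iff.rfl

@[simp]
theorem shortenRows_empty : shortenRows B ∅ = B := by
  ext M
  simp [mem_shortenRows]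

/-- Shortening on the further rows `T` costs at most `n * T.card` dimensions. -/
theorem finrank_shortenRows_le (S T : Finset (Fin n)) :
    Module.finrank F (shortenRows B S) ≤
      Module.finrank F (shortenRows B (S ∪ T)) + n * T.card := by
  let f : shortenRows B S →ₗ[F] (T → Fin n → F) :=
    { toFun := fun M i j => M.1 i j
      map_add' := fun _ _ => rfl
      map_smul' := fun _ _ => rfl }
  have hker : Module.finrank F (LinearMap.ker f) ≤
      Module.finrank F (shortenRows B (S ∪ T)) := by
    let g : LinearMap.ker f →ₗ[F] shortenRows B (S ∪ T) :=
      LinearMap.codRestrict _ ((shortenRows B S).subtype ∘ₗ (LinearMap.ker f).subtype) (by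
        rintro ⟨⟨M, hM⟩, hf⟩
        refine ⟨hM.1, fun i hi j => ?_⟩
        rcases Finset.mem_union.1 hi with hi | hi
        · exact hM.2 i hi j
        · exact congrFun (congrFun (LinearMap.mem_ker.1 hf) ⟨i, hi⟩) j)
    refine LinearMap.finrank_le_finrank_of_injective (f := g) fun a b hab => ?_
    have hval : (g a).1 = (g b).1 := by rw [hab]
    exact Subtype.ext (Subtype.ext hval)
  have hrange : Module.finrank F (LinearMap.range f) ≤ n * T.card := by
    refine (Submodule.finrank_le _).trans_eq ?_
    simp [Module.finrank_pi_fintype, mul_comm]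
  have := f.finrank_range_add_finrank_ker
  omega

theorem exists_row_ne_zero_of_finrank_pos {S : Finset (Fin n)}
    (h : 0 < Module.finrank F (shortenRows B S)) :
    ∃ M ∈ shortenRows B S, ∃ i ∉ S, ∃ j, M i j ≠ 0 := by
  have hne : shortenRows B S ≠ ⊥ := by
    intro h0
    rw [h0, finrank_bot] at h
    exact h.false
  obtain ⟨M, hM, hM0⟩ := Submodule.exists_mem_ne_zero_of_ne_bot hne
  obtain ⟨i, j, hij⟩ : ∃ i j, M i j ≠ 0 := by
    by_contra! h0
    exact hM0 (Matrix.ext h0)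
  exact ⟨M, hM, i, fun hi => hij (hM.2 i hi j), j, hij⟩

/-- A nonzero codeword vanishing on the rows in `S` has cover weight at most `n - S.card`. -/
theorem minCoverDist_add_card_le {S : Finset (Fin n)}
    (h : 0 < Module.finrank F (shortenRows B S)) :
    minCoverDist (B : Set (Matrix (Fin n) (Fin n) F)) + S.card ≤ n := by
  obtain ⟨M, hM, i, -, j, hij⟩ := exists_row_ne_zero_of_finrank_pos h
  have hM0 : M ≠ 0 := fun h0 => hij (by simp [h0])
  have h1 : minCoverDist (B : Set (Matrix (Fin n) (Fin n) F)) ≤ coverWeight M :=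
    Nat.sInf_le ⟨M, hM.1, hM0, rfl⟩
  have h2 : coverWeight M ≤ Sᶜ.card := coverWeight_le_card_rows fun a b hab =>
    Finset.mem_compl.2 fun ha => hab (hM.2 a ha b)
  have h3 := Finset.card_add_card_compl S
  rw [Fintype.card_fin] at h3
  omega

/-- Adjoining a recovery set to `S` gains `ρ - 1` rows over the dimensions it costs. -/
theorem CoverLocality.exists_shortenRows_step {r ρ : ℕ} (hloc : CoverLocality B r ρ)
    (hρ : 0 < ρ) {S : Finset (Fin n)} (h : 0 < Module.finrank F (shortenRows B S)) :
    ∃ (S' : Finset (Fin n)) (a : ℕ), a ≤ r ∧ S'.card = S.card + a + (ρ - 1) ∧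
      Module.finrank F (shortenRows B S) ≤ Module.finrank F (shortenRows B S') + n * a := by
  obtain ⟨M, hM, i, -, j, hij⟩ := exists_row_ne_zero_of_finrank_pos h
  obtain ⟨Γ, hiΓ, hΓ, hwt⟩ := hloc.1 i
  have hcard : ρ ≤ (Γ \ S).card := by
    refine (hwt M hM.1 fun h0 => hij ?_).trans (coverWeight_le_card_rows fun a b hab => ?_)
    · simpa [rowRestrict, hiΓ] using congrFun (congrFun h0 i) j
    · simp only [rowRestrict, Matrix.of_apply, ne_eq, ite_eq_right_iff, Classical.not_imp] at hab
      exact Finset.mem_sdiff.2 ⟨hab.1, fun ha => hab.2 (hM.2 a ha b)⟩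
  obtain ⟨T, hT, hTcard⟩ := Finset.exists_subset_card_eq (s := Γ \ S) (n := ρ - 1) (by omega)
  have hle : shortenRows B (S ∪ ((Γ \ S) \ T)) ≤ shortenRows B (S ∪ Γ) := by
    intro N hN
    have hsupp : ∀ a ∈ Γ, ∀ b, N a b ≠ 0 → a ∈ T := by
      intro a ha b hab
      by_contra haT
      refine hab (hN.2 a ?_ b)
      by_cases haS : a ∈ S <;> simp [ha, haS, haT]
    have hzero : rowRestrict Γ N = 0 := by
      by_contra hne
      have hub : coverWeight (rowRestrict Γ N) ≤ T.card := coverWeight_le_card_rows fun a b hab => by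
        simp only [rowRestrict, Matrix.of_apply, ne_eq, ite_eq_right_iff,
          Classical.not_imp] at hab
        exact hsupp a hab.1 b hab.2
      have := hwt N hN.1 hne
      omega
    refine ⟨hN.1, fun a ha b => ?_⟩
    rcases Finset.mem_union.1 ha with ha | ha
    · exact hN.2 a (Finset.mem_union_left _ ha) b
    · simpa [rowRestrict, ha] using congrFun (congrFun hzero a) b
  have hsd := Finset.card_sdiff_add_card_eq_card hT
  have hΓS : (Γ \ S).card ≤ Γ.card := Finset.card_le_card Finset.sdiff_subset
  have hun : (S ∪ Γ).card = S.card + (Γ \ S).card := by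
    rw [← Finset.union_sdiff_self_eq_union, Finset.card_union_of_disjoint Finset.disjoint_sdiff]
  refine ⟨S ∪ Γ, ((Γ \ S) \ T).card, by omega, by omega, ?_⟩
  exact (finrank_shortenRows_le S _).trans (Nat.add_le_add_right (Submodule.finrank_mono hle) _)

/-- Iterating the step `t` times is possible as long as `t * (n * r)` is below the dimension. -/
theorem CoverLocality.exists_shortenRows_iterate {r ρ : ℕ} (hloc : CoverLocality B r ρ)
    (hρ : 0 < ρ) (t : ℕ) (ht : t * (n * r) < Module.finrank F B) :
    ∃ S : Finset (Fin n),
      Module.finrank F B ≤ Module.finrank F (shortenRows B S) + t * (n * r) ∧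
      Module.finrank F B + n * (t * (ρ - 1)) ≤
        Module.finrank F (shortenRows B S) + n * S.card := by
  induction t with
  | zero => exact ⟨∅, by rw [shortenRows_empty]; simp⟩
  | succ t ih =>
    rw [Nat.add_one_mul] at ht
    obtain ⟨S, h1, h2⟩ := ih (by omega)
    obtain ⟨S', a, ha, hcard, hS'⟩ := hloc.exists_shortenRows_step hρ (S := S) (by omega)
    refine ⟨S', ?_, ?_⟩
    · have := Nat.mul_le_mul_left n ha
      rw [Nat.add_one_mul]
      omega
    · rw [hcard]
      linarith

/-- Extending `S` row by row while some nonzero codeword vanishes on it bounds the distance. -/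
theorem mul_minCoverDist_add_le {c : ℕ} (S : Finset (Fin n))
    (hpos : 0 < Module.finrank F (shortenRows B S))
    (hc : c ≤ Module.finrank F (shortenRows B S) + n * S.card) :
    n * minCoverDist (B : Set (Matrix (Fin n) (Fin n) F)) + c ≤ n * (n + 1) := by
  obtain ⟨M, -, i, hi, -⟩ := exists_row_ne_zero_of_finrank_pos hpos
  have hstep := finrank_shortenRows_le (B := B) S {i}
  have hcard : (S ∪ {i}).card = S.card + 1 := by
    rw [Finset.card_union_of_disjoint (by simpa using hi), Finset.card_singleton]
  rw [Finset.card_singleton] at hstep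
  rcases Nat.eq_zero_or_pos (Module.finrank F (shortenRows B (S ∪ {i}))) with h0 | h0
  · have := Nat.mul_le_mul_left n (minCoverDist_add_card_le hpos)
    linarith
  · have hlt := minCoverDist_add_card_le h0
    refine mul_minCoverDist_add_le (S ∪ {i}) h0 ?_
    rw [hcard]
    linarith
termination_by n - S.card
decreasing_by omega

end shortenRows

/-- Alphabet-free Singleton-like bound on the cover distance:
for a nonzero linear `[n×n, k, d, r, ρ]_q` cover-metric code with `(r,ρ)` cover-locality,
`d ≤ n - k/n + 1 - (⌈k/(n·r)⌉ - 1)(ρ - 1)` as rational numbers. -/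
theorem cover_locality_singleton_bound
    (q n k r ρ : ℕ) (hq : IsPrimePow q) (hn : 0 < n) (hk : 0 < k) (hr : 0 < r)
    (hρ : 0 < ρ) (F : Type) [Field F] [Fintype F] (hcard : Fintype.card F = q)
    (B : Submodule F (Matrix (Fin n) (Fin n) F)) (hB : B ≠ ⊥)
    (hdim : Module.finrank F B = k)
    (hloc : CoverLocality B r ρ)
    (d : ℕ) (hd : d = minCoverDist (B : Set (Matrix (Fin n) (Fin n) F))) :
    (d : ℚ) ≤ (n : ℚ) - (k : ℚ) / (n : ℚ) + 1 -
      ((⌈(k : ℚ) / ((n : ℚ) * (r : ℚ))⌉ : ℚ) - 1) * ((ρ : ℚ) - 1) := by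
  subst hd
  have hn' : (0 : ℚ) < n := by exact_mod_cast hn
  have hr' : (0 : ℚ) < r := by exact_mod_cast hr
  have hk' : (0 : ℚ) < k := by exact_mod_cast hk
  have hceil : 0 < ⌈(k : ℚ) / ((n : ℚ) * (r : ℚ))⌉ := Int.ceil_pos.2 (by positivity)
  obtain ⟨t, ht⟩ : ∃ t : ℕ, ⌈(k : ℚ) / ((n : ℚ) * (r : ℚ))⌉ = t + 1 :=
    ⟨(⌈(k : ℚ) / ((n : ℚ) * (r : ℚ))⌉ - 1).toNat, by omega⟩
  have htk : t * (n * r) < k := by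
    have h : (t : ℚ) < (k : ℚ) / ((n : ℚ) * (r : ℚ)) := by
      have := Int.lt_ceil.1 (show (t : ℤ) < ⌈(k : ℚ) / ((n : ℚ) * (r : ℚ))⌉ by omega)
      exact_mod_cast this
    rw [lt_div_iff₀ (by positivity)] at h
    exact_mod_cast h
  obtain ⟨S, h1, h2⟩ := hloc.exists_shortenRows_iterate hρ t (by omega)
  have hbound := mul_minCoverDist_add_le S (by omega) h2
  rw [hdim] at hbound
  obtain ⟨s, rfl⟩ : ∃ s, ρ = s + 1 := ⟨ρ - 1, by omega⟩
  rw [Nat.add_sub_cancel] at hbound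
  have hQ : (n : ℚ) * minCoverDist (B : Set (Matrix (Fin n) (Fin n) F)) + (k + n * (t * s)) ≤
      n * (n + 1) := by exact_mod_cast hbound
  rw [ht]
  push_cast
  refine le_of_mul_le_mul_left ?_ hn'
  have hdiv : (n : ℚ) * (k / n) = k := by field_simp
  linear_combination hQ + hdiv
end

section
/- Let q be a prime power, n, r, ρ positive integers, 𝔹 ⊆ F_q^{n×n} an F_q-linear array code with (r,ρ) cover-locality, and φ : F_q^n → F_{q^n} an F_q-linear bijection applied columnwise to give φ_ext : F_q^{n×n} → (F_{q^n})^n. Then the image code φ_ext(𝔹) ⊆ (F_{q^n})^n has (r,ρ) Hamming locality: for every coordinate j ∈ [n] there exists Γ(j) ⊆ [n] with j ∈ Γ(j), |Γ(j)| ≤ r+ρ−1, and every element of φ_ext(𝔹) whose restriction to the coordinates Γ(j) is nonzero has at least ρ nonzero coordinates inside Γ(j). -/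
/-- The cover weight is at most the number of columns in any set of columns
containing all nonzero entries. -/
theorem coverWeight_le_card_of_columns {F : Type*} [Zero F] {m n : ℕ}
    {E : Matrix (Fin m) (Fin n) F} (S : Finset (Fin n))
    (hS : ∀ i j, E i j ≠ 0 → j ∈ S) : coverWeight E ≤ S.card :=
  Nat.sInf_le ⟨S.map Function.Embedding.inr,
    fun i j hij => Or.inr (Finset.mem_map_of_mem _ (hS i j hij)), S.card_map _⟩

/-- if `𝔹 ⊆ F_q^{n×n}` has `(r,ρ)` cover-locality, then the image
code `φ_ext(𝔹) ⊆ (F_{q^n})^n` (under a columnwise `F_q`-linear bijection) has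
`(r,ρ)` Hamming locality: every coordinate `j` has a recovery set `Γ(j)` of at most
`r + ρ - 1` coordinates containing `j`, such that every image codeword that is
nonzero on `Γ(j)` has at least `ρ` nonzero coordinates inside `Γ(j)`. -/
theorem image_hamming_locality_of_cover_locality
    (q n r ρ : ℕ) (hq : IsPrimePow q) (hn : 0 < n) (hr : 0 < r) (hρ : 0 < ρ)
    (F : Type) [Field F] [Fintype F] (hcard : Fintype.card F = q)
    (K : Type) [Field K] [Fintype K] [Algebra F K] (hcardK : Fintype.card K = q ^ n)
    (φ : (Fin n → F) ≃ₗ[F] K)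
    (B : Submodule F (Matrix (Fin n) (Fin n) F))
    (hloc : CoverLocality B r ρ) :
    ∀ j : Fin n, ∃ Γ : Finset (Fin n), j ∈ Γ ∧ Γ.card ≤ r + ρ - 1 ∧
      ∀ c ∈ ((fun (M : Matrix (Fin n) (Fin n) F) (j' : Fin n) =>
          φ (fun i => M i j')) '' (B : Set (Matrix (Fin n) (Fin n) F))),
        (∃ a ∈ Γ, c a ≠ 0) → ρ ≤ Nat.card {a : Fin n // a ∈ Γ ∧ c a ≠ 0} := by
  classical
  intro j
  obtain ⟨Γ, hj, hΓ, hdist⟩ := hloc.2 j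
  refine ⟨Γ, hj, hΓ, ?_⟩
  rintro _ ⟨M, hM, rfl⟩ ⟨a, ha, hca⟩
  have hne : colRestrict Γ M ≠ 0 := by
    intro h
    refine hca ((map_eq_zero_iff φ φ.injective).2 (funext fun i => ?_))
    simpa [colRestrict, ha] using congrFun (congrFun h i) a
  refine (hdist M hM hne).trans ?_
  rw [Nat.card_eq_fintype_card, Fintype.card_subtype]
  refine coverWeight_le_card_of_columns _ fun i b hib => ?_
  have hb : b ∈ Γ ∧ M i b ≠ 0 := by simpa [colRestrict] using hib
  exact Finset.mem_filter.2 ⟨Finset.mem_univ b, hb.1, fun h =>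
    hb.2 (congrFun ((map_eq_zero_iff φ φ.injective).1 h) i)⟩
end

section
/- Let q be a prime power, n a positive integer, R : [n]×[n] → [n] a Latin square (for each s the map j ↦ R(s,j) is injective, and for each j the map s ↦ R(s,j) is injective), and 𝒞 ⊆ F_q^n a nonzero F_q-linear code. Define the array code 𝔹_R = { vd_R(T) : T ∈ 𝒞^n }, where vd_R(T)_{R(s,j), j} = c^{(s)}_j for T = (c^{(1)},…,c^{(n)}). Then 𝔹_R is an F_q-linear subspace of F_q^{n×n} of dimension n·dim_{F_q}(𝒞), and its minimum cover distance equals the minimum Hamming distance of 𝒞: d_C(𝔹_R) = d_H(𝒞). -/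
theorem IsCover.coverWeight_le {F : Type*} [Zero F] {m n : ℕ} {E : Matrix (Fin m) (Fin n) F}
    {X : Finset (Fin m ⊕ Fin n)} (hX : IsCover E X) : coverWeight E ≤ X.card :=
  Nat.sInf_le ⟨X, hX, rfl⟩

theorem exists_isCover_card_eq_coverWeight {F : Type*} [Zero F] {m n : ℕ}
    (E : Matrix (Fin m) (Fin n) F) :
    ∃ X : Finset (Fin m ⊕ Fin n), IsCover E X ∧ X.card = coverWeight E :=
  Nat.sInf_mem (s := {k | ∃ X : Finset (Fin m ⊕ Fin n), IsCover E X ∧ X.card = k})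
    ⟨_, Finset.univ, fun _ _ _ => Or.inl (Finset.mem_univ _), rfl⟩

/-- The entries of a matrix along a partial transversal `j ↦ (r j, j)` bound its cover weight
from below, since a line meets such a transversal at most once. -/
theorem hWt_le_coverWeight_of_injective {F : Type*} [Zero F] {m n : ℕ}
    (E : Matrix (Fin m) (Fin n) F) {r : Fin n → Fin m} (hr : Function.Injective r) :
    hWt (fun j => E (r j) j) ≤ coverWeight E := by
  classical
  obtain ⟨X, hX, hcard⟩ := exists_isCover_card_eq_coverWeight E
  let line : {j // E (r j) j ≠ 0} → X := fun j =>
    if h : Sum.inl (r j) ∈ X then ⟨_, h⟩ else ⟨Sum.inr j, (hX _ _ j.2).resolve_left h⟩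
  have hline : Function.Injective line := by
    intro j k hjk
    simp only [line] at hjk
    split_ifs at hjk <;> simp_all [hr.eq_iff, Subtype.ext_iff]
  rw [← hcard, hWt]
  simpa using Nat.card_le_card_of_injective line hline

/-- A matrix all of whose rows equal `c` is covered by the columns in the support of `c`. -/
theorem coverWeight_of_const_rows_le {F : Type*} [Zero F] {m n : ℕ} (c : Fin n → F) :
    coverWeight (Matrix.of fun (_ : Fin m) j => c j) ≤ hWt c := by
  classical
  have hX : IsCover (Matrix.of fun (_ : Fin m) j => c j)
      ((Finset.univ.filter fun j => c j ≠ 0).map Function.Embedding.inr) := by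
    intro i j hij
    exact Or.inr (by simpa using hij)
  refine hX.coverWeight_le.trans_eq ?_
  rw [Finset.card_map, hWt, Nat.card_eq_fintype_card, Fintype.card_subtype]

/-- Reading a matrix along the transversals `j ↦ (R s j, j)` of a column-Latin array `R` is a
linear equivalence; its inverse is the vector-diagonal arrangement. -/
noncomputable def readDiagonals (F : Type*) [Semiring F] {n : ℕ} (R : Fin n → Fin n → Fin n)
    (hR : ∀ j, Function.Injective fun s => R s j) :
    Matrix (Fin n) (Fin n) F ≃ₗ[F] (Fin n → Fin n → F) :=
  LinearEquiv.ofBijective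
    { toFun := fun M s j => M (R s j) j
      map_add' := fun _ _ => rfl
      map_smul' := fun _ _ => rfl }
    (by
      have hbij : ∀ j, Function.Bijective fun s => R s j :=
        fun j => Finite.injective_iff_bijective.mp (hR j)
      refine ⟨fun M N h => ?_, fun T => ?_⟩
      · ext i j
        obtain ⟨s, rfl⟩ := (hbij j).2 i
        exact congrFun (congrFun h s) j
      · refine ⟨Matrix.of fun i j => T ((Equiv.ofBijective _ (hbij j)).symm i) j, ?_⟩
        ext s j
        exact congrArg (T · j) ((Equiv.ofBijective _ (hbij j)).symm_apply_apply s))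

/-- The array code of all vector-diagonal arrangements of tuples of codewords of `C`. -/
noncomputable def vdCode {F : Type*} [Field F] {n : ℕ} (R : Fin n → Fin n → Fin n)
    (hR : ∀ j, Function.Injective fun s => R s j) (C : Submodule F (Fin n → F)) :
    Submodule F (Matrix (Fin n) (Fin n) F) :=
  LinearMap.range ((readDiagonals F R hR).symm.toLinearMap ∘ₗ
    LinearMap.compLeft C.subtype (Fin n))

section vdCode

variable {F : Type*} [Field F] {n : ℕ} {R : Fin n → Fin n → Fin n}
  (hR : ∀ j, Function.Injective fun s => R s j) (C : Submodule F (Fin n → F))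

theorem mem_vdCode {M : Matrix (Fin n) (Fin n) F} :
    M ∈ vdCode R hR C ↔ ∀ s, (fun j => M (R s j) j) ∈ C := by
  constructor
  · rintro ⟨T, hT⟩ s
    have h : readDiagonals F R hR M = LinearMap.compLeft C.subtype (Fin n) T :=
      ((readDiagonals F R hR).symm_apply_eq.mp hT).symm
    have hs : (fun j => M (R s j) j) = T s := congrFun h s
    exact hs ▸ (T s).2
  · exact fun h => ⟨fun s => ⟨_, h s⟩, (readDiagonals F R hR).symm_apply_apply M⟩

theorem finrank_vdCode : Module.finrank F (vdCode R hR C) = n * Module.finrank F C := by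
  have hinj : Function.Injective ((readDiagonals F R hR).symm.toLinearMap ∘ₗ
      LinearMap.compLeft C.subtype (Fin n)) :=
    (readDiagonals F R hR).symm.injective.comp (Subtype.val_injective.comp_left)
  rw [vdCode, LinearMap.finrank_range_of_inj hinj, Module.finrank_pi_fintype]
  simp

theorem minCoverDist_vdCode (hn : 0 < n) (hrow : ∀ s, Function.Injective (R s)) (hC : C ≠ ⊥) :
    minCoverDist (vdCode R hR C : Set (Matrix (Fin n) (Fin n) F)) =
      minHammingDist (C : Set (Fin n → F)) := by
  have const_mem : ∀ c ∈ C, c ≠ 0 → Matrix.of (fun (_ : Fin n) j => c j) ∈ vdCode R hR C ∧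
      Matrix.of (fun (_ : Fin n) j => c j) ≠ 0 := fun c hc hc0 =>
    ⟨(mem_vdCode hR C).mpr fun _ => hc, fun h => hc0 (congrFun h ⟨0, hn⟩)⟩
  obtain ⟨c₀, hc₀, hne⟩ := C.ne_bot_iff.mp hC
  apply le_antisymm
  · obtain ⟨c, hc, hc0, hd⟩ := Nat.sInf_mem
      (s := {d | ∃ c ∈ (C : Set (Fin n → F)), c ≠ 0 ∧ hWt c = d}) ⟨_, c₀, hc₀, hne, rfl⟩
    obtain ⟨hmem, hM0⟩ := const_mem c hc hc0
    have hle : minCoverDist (vdCode R hR C : Set (Matrix (Fin n) (Fin n) F)) ≤ coverWeight _ :=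
      Nat.sInf_le ⟨_, hmem, hM0, rfl⟩
    exact hle.trans ((coverWeight_of_const_rows_le c).trans hd.le)
  · obtain ⟨hmem, hM0⟩ := const_mem c₀ hc₀ hne
    obtain ⟨M, hM, hM0, hd⟩ := Nat.sInf_mem
      (s := {d | ∃ M ∈ (vdCode R hR C : Set (Matrix (Fin n) (Fin n) F)),
        M ≠ 0 ∧ coverWeight M = d}) ⟨_, _, hmem, hM0, rfl⟩
    obtain ⟨s, hs⟩ : ∃ s, (fun j => M (R s j) j) ≠ 0 :=
      Function.ne_iff.mp ((readDiagonals F R hR).map_ne_zero_iff.mpr hM0)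
    have hle : minHammingDist (C : Set (Fin n → F)) ≤ hWt _ :=
      Nat.sInf_le ⟨_, (mem_vdCode hR C).mp hM s, hs, rfl⟩
    exact hle.trans ((hWt_le_coverWeight_of_injective M (hrow s)).trans hd.le)

end vdCode

/-- for a Latin square `R` and a nonzero linear code `𝒞 ⊆ F_q^n`,
the array code `𝔹_R = { vd_R(T) : T ∈ 𝒞^n }` is an `F_q`-linear subspace of
`F_q^{n×n}` of dimension `n · dim 𝒞`, and its minimum cover distance equals the
minimum Hamming distance of `𝒞`. -/
theorem vd_code_is_linear_dim_and_dist
    (q n : ℕ) (hq : IsPrimePow q) (hn : 0 < n)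
    (F : Type) [Field F] [Fintype F] (hcard : Fintype.card F = q)
    (R : Fin n → Fin n → Fin n)
    (hR1 : ∀ s, Function.Injective (R s))
    (hR2 : ∀ j, Function.Injective (fun s => R s j))
    (C : Submodule F (Fin n → F)) (hC : C ≠ ⊥) :
    ∃ B : Submodule F (Matrix (Fin n) (Fin n) F),
      (B : Set (Matrix (Fin n) (Fin n) F)) =
        {M | ∃ T : Fin n → (Fin n → F), (∀ s, T s ∈ C) ∧ ∀ s j, M (R s j) j = T s j} ∧
      Module.finrank F B = n * Module.finrank F C ∧
      minCoverDist (B : Set (Matrix (Fin n) (Fin n) F)) =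
        minHammingDist (C : Set (Fin n → F)) := by
  refine ⟨vdCode R hR2 C, ?_, finrank_vdCode hR2 C, minCoverDist_vdCode hR2 C hn hR1 hC⟩
  ext M
  refine (mem_vdCode hR2 C).trans ⟨fun h => ⟨_, h, fun _ _ => rfl⟩, ?_⟩
  rintro ⟨T, hT, hM⟩ s
  exact (funext (hM s) : (fun j => M (R s j) j) = T s) ▸ hT s
end

section
/- Let q be a prime power, n, r, ρ positive integers, R : [n]×[n] → [n] a Latin square, and 𝒞 ⊆ F_q^n an F_q-linear code with (r,ρ) Hamming locality, i.e., for every coordinate j ∈ [n] there exists Γ(j) ⊆ [n] with j ∈ Γ(j), |Γ(j)| ≤ r+ρ−1, and every codeword of 𝒞 whose restriction to Γ(j) is nonzero has at least ρ nonzero coordinates in Γ(j). Define 𝔹_R = { vd_R(T) : T ∈ 𝒞^n } with vd_R(T)_{R(s,j), j} = c^{(s)}_j. Then 𝔹_R satisfies the column part of (r,ρ) cover-locality: for every column index j, the restriction of 𝔹_R to the columns in Γ(j) has minimum cover distance at least ρ, i.e., every codeword of 𝔹_R whose restriction to the columns Γ(j) is a nonzero matrix has cover weight at least ρ on those columns.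 -/
/-- Nonzero entries in pairwise distinct rows and columns need pairwise distinct lines in any
cover, so their number bounds the cover weight from below. -/
theorem card_le_coverWeight {F : Type*} [Zero F] {m n : ℕ} {E : Matrix (Fin m) (Fin n) F}
    {S : Finset (Fin n)} {f : Fin n → Fin m} (hf : Function.Injective f)
    (hE : ∀ a ∈ S, E (f a) a ≠ 0) : S.card ≤ coverWeight E := by
  refine le_csInf ⟨_, Finset.univ, fun i j _ => Or.inl (Finset.mem_univ _), rfl⟩ ?_
  rintro k ⟨X, hX, rfl⟩
  refine Finset.card_le_card_of_injOn
    (fun a => if Sum.inr a ∈ X then Sum.inr a else Sum.inl (f a)) ?_ ?_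
  · intro a ha
    by_cases h : Sum.inr a ∈ X
    · simp [h]
    · simpa [h] using (hX _ _ (hE a ha)).resolve_right h
  · intro a _ b _ hab
    by_cases ha : Sum.inr a ∈ X <;> by_cases hb : Sum.inr b ∈ X <;>
      simp [ha, hb] at hab
    · exact hab
    · exact hf hab

/-- if the constituent code `𝒞 ⊆ F_q^n` has `(r,ρ)` Hamming
locality with recovery sets `Γ(j)`, then the Latin-square array code
`𝔹_R = { vd_R(T) : T ∈ 𝒞^n }` satisfies the column part of `(r,ρ)` cover-locality:
every codeword whose restriction to the columns `Γ(j)` is nonzero has cover weight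
at least `ρ` on those columns. -/
theorem vd_code_column_cover_locality
    (q n r ρ : ℕ) (hq : IsPrimePow q) (hn : 0 < n) (hr : 0 < r) (hρ : 0 < ρ)
    (F : Type) [Field F] [Fintype F] (hcard : Fintype.card F = q)
    (R : Fin n → Fin n → Fin n)
    (hR1 : ∀ s, Function.Injective (R s))
    (hR2 : ∀ j, Function.Injective (fun s => R s j))
    (C : Submodule F (Fin n → F))
    (Γ : Fin n → Finset (Fin n))
    (hΓmem : ∀ j, j ∈ Γ j)
    (hΓcard : ∀ j, (Γ j).card ≤ r + ρ - 1)
    (hΓloc : ∀ j, ∀ c ∈ C, (∃ a ∈ Γ j, c a ≠ 0) →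
      ρ ≤ Nat.card {a : Fin n // a ∈ Γ j ∧ c a ≠ 0}) :
    ∀ j : Fin n, ∀ T : Fin n → (Fin n → F), (∀ s, T s ∈ C) →
      ∀ M : Matrix (Fin n) (Fin n) F, (∀ s j', M (R s j') j' = T s j') →
        colRestrict (Γ j) M ≠ 0 → ρ ≤ coverWeight (colRestrict (Γ j) M) := by
  classical
  intro j T hT M hM hne
  obtain ⟨i, b, hib⟩ : ∃ i b, colRestrict (Γ j) M i b ≠ 0 := by
    by_contra! h
    exact hne (Matrix.ext h)
  obtain ⟨hb, hMib⟩ : b ∈ Γ j ∧ M i b ≠ 0 := by simpa [colRestrict] using hib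
  obtain ⟨s, rfl⟩ := Finite.surjective_of_injective (hR2 b) i
  rw [hM] at hMib
  refine (hΓloc j (T s) (hT s) ⟨b, hb, hMib⟩).trans ?_
  rw [Nat.card_eq_fintype_card, Fintype.card_subtype]
  refine card_le_coverWeight (hR1 s) fun a ha => ?_
  obtain ⟨haΓ, hTa⟩ := (Finset.mem_filter.mp ha).2
  simpa [colRestrict, haΓ, hM] using hTa
end

section
/- Let q be a prime power, n, ρ, μ, n_l positive integers with n = μ·n_l, S_1,…,S_μ a partition of the column set [n] with each |S_b| = n_l, and T_1,…,T_μ a partition of the row set [n] with each |T_a| = n_l. Let R : [n]×[n] → [n] be a Latin square that is block-compatible: for all a, b ∈ [μ], all s ∈ [n], and all j, j' ∈ S_b, R(s,j) ∈ T_a if and only if R(s,j') ∈ T_a. Let 𝒞 ⊆ F_q^n be an F_q-linear code such that for every b ∈ [μ], every codeword of 𝒞 whose restriction to S_b is nonzero has at least ρ nonzero coordinates in S_b. Define 𝔹_R = { vd_R(T) : T ∈ 𝒞^n } with vd_R(T)_{R(s,j), j} = c^{(s)}_j. Then 𝔹_R has block-locality with local distance ρ: for every a, b ∈ [μ], every codeword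 of 𝔹_R whose restriction to the n_l × n_l subarray with rows T_a and columns S_b is nonzero has cover weight at least ρ on that subarray. -/
/-- Restriction of a matrix to the subarray with rows `Γr` and columns `Γc`
(other entries zeroed out). -/
def blockRestrict {F : Type*} [Zero F] {n : ℕ} (Γr Γc : Finset (Fin n))
    (M : Matrix (Fin n) (Fin n) F) : Matrix (Fin n) (Fin n) F :=
  Matrix.of fun i j => if i ∈ Γr ∧ j ∈ Γc then M i j else 0

/-- The nonzero entries of a partial transversal bound the cover weight from below: no line
meets two of them. -/
theorem card_le_coverWeight_of_injOn {F : Type*} [Zero F] {m n : ℕ}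
    (E : Matrix (Fin m) (Fin n) F) (J : Finset (Fin n)) (f : Fin n → Fin m)
    (hf : Set.InjOn f J) (hE : ∀ j ∈ J, E (f j) j ≠ 0) :
    J.card ≤ coverWeight E := by
  classical
  refine le_csInf ⟨_, Finset.univ, fun i j _ => Or.inl (Finset.mem_univ _), rfl⟩ ?_
  rintro k ⟨X, hX, rfl⟩
  refine Finset.card_le_card_of_injOn
    (fun j => if Sum.inr j ∈ X then Sum.inr j else Sum.inl (f j)) ?_ ?_
  · intro j hj
    have hcov := hX _ _ (hE j hj)
    by_cases h : Sum.inr j ∈ X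
    · simp [h]
    · simpa [h] using hcov
  · intro j hj j' hj' h
    dsimp only at h
    split_ifs at h
    · exact Sum.inr_injective h
    · exact hf hj hj' (Sum.inl_injective h)

/-- under the hypotheses of the block-compatible Latin-square
construction, the array code `𝔹_R = { vd_R(T) : T ∈ 𝒞^n }` has block-locality with
local distance `ρ`: every codeword whose restriction to the subarray with rows
`Trow a` and columns `S b` is nonzero has cover weight at least `ρ` on that
subarray. -/
theorem vd_code_block_locality
    (q n ρ μ nl : ℕ) (hq : IsPrimePow q) (hn : 0 < n) (hρ : 0 < ρ)
    (hμ : 0 < μ) (hnl : 0 < nl) (hmul : n = μ * nl)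
    (F : Type) [Field F] [Fintype F] (hcard : Fintype.card F = q)
    (S : Fin μ → Finset (Fin n)) (Trow : Fin μ → Finset (Fin n))
    (hScard : ∀ b, (S b).card = nl) (hTcard : ∀ a, (Trow a).card = nl)
    (hSpart : ∀ j : Fin n, ∃! b, j ∈ S b)
    (hTpart : ∀ i : Fin n, ∃! a, i ∈ Trow a)
    (R : Fin n → Fin n → Fin n)
    (hR1 : ∀ s, Function.Injective (R s))
    (hR2 : ∀ j, Function.Injective (fun s => R s j))
    (hcompat : ∀ (a b : Fin μ) (s : Fin n), ∀ j ∈ S b, ∀ j' ∈ S b,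
      (R s j ∈ Trow a ↔ R s j' ∈ Trow a))
    (C : Submodule F (Fin n → F))
    (hCloc : ∀ b : Fin μ, ∀ c ∈ C, (∃ j ∈ S b, c j ≠ 0) →
      ρ ≤ Nat.card {j : Fin n // j ∈ S b ∧ c j ≠ 0}) :
    ∀ a b : Fin μ, ∀ T : Fin n → (Fin n → F), (∀ s, T s ∈ C) →
      ∀ M : Matrix (Fin n) (Fin n) F, (∀ s j, M (R s j) j = T s j) →
        blockRestrict (Trow a) (S b) M ≠ 0 →
          ρ ≤ coverWeight (blockRestrict (Trow a) (S b) M) := by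
  classical
  intro a b T hT M hM hne
  obtain ⟨i, j, hij⟩ : ∃ i j, blockRestrict (Trow a) (S b) M i j ≠ 0 := by
    by_contra! h
    exact hne (Matrix.ext h)
  obtain ⟨⟨hi, hj⟩, hMij⟩ : (i ∈ Trow a ∧ j ∈ S b) ∧ M i j ≠ 0 := by
    simpa [blockRestrict, and_assoc] using hij
  obtain ⟨s, rfl⟩ := Finite.surjective_of_injective (hR2 j) i
  have hcount := hCloc b (T s) (hT s) ⟨j, hj, hM s j ▸ hMij⟩
  rw [Nat.card_eq_fintype_card, Fintype.card_subtype] at hcount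
  refine hcount.trans (card_le_coverWeight_of_injOn _ _ (R s) (hR1 s).injOn fun j' hj' => ?_)
  obtain ⟨hj'S, hTj'⟩ : j' ∈ S b ∧ T s j' ≠ 0 := by simpa using hj'
  have hrow : R s j' ∈ Trow a := (hcompat a b s j hj j' hj'S).1 hi
  simpa [blockRestrict, hrow, hj'S, hM] using hTj'
end
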